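/- Let Ω = {x ∈ ℝ³ : x₁² + x₂² < R², |x₃| < a} and η(x) = (-x₂, x₁, 0). If v : Ω × [0,T] → ℝ³ is a smooth solution of the incompressible Navier–Stokes equations in Ω with v·n = 0 on the lateral boundary, n·D(v)·τ = 0 for the tangential directions, and periodic boundary conditions in x₃, then d/dt ∫_Ω v(x,t)·η(x) dx = 0; in particular ∫_Ω v(t)·η dx = ∫_Ω v(0)·η dx for all t. -/

import Mathlib

open MeasureTheory

/-- Partial derivative `∂_j f (x)` of a scalar function on `ℝ³`. -/
noncomputable def pd (f : EuclideanSpace ℝ (Fin 3) → ℝ) (j : Fin 3)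
    (x : EuclideanSpace ℝ (Fin 3)) : ℝ :=
  fderiv ℝ f x (EuclideanSpace.single j 1)

/-- The rotational vector field `η(x) = (-x₂, x₁, 0)`. -/
def eta (x : EuclideanSpace ℝ (Fin 3)) : Fin 3 → ℝ := ![-(x 1), x 0, 0]

/-!
Since `div u = 0`, the momentum equation reads `∂ₜu = div (S - u ⊗ u)` with a symmetric tensor
`S - u ⊗ u`. Contracting with `η`, whose Jacobian is antisymmetric, therefore gives
`∂ₜ(u·η) = div ((S - u ⊗ u) η)` without source terms, and the boundary conditions make this flux
tangential to the lateral boundary and periodic along the axis.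

The divergence theorem on the cylinder is reduced to the one on a box. Let `ρ = R² - x₁² - x₂²`, let
`χ` be a smooth transition from `0` to `1`, and multiply the flux `F` by `χ(nρ)`. As `F·∇ρ` vanishes
on the lateral boundary, it is `O(ρ)`, so the extra term `n χ'(nρ) F·∇ρ` stays bounded, while it
tends to `0` pointwise.
-/

open Filter Matrix Set Topology

section MomentumFlux

variable {ι : Type*} [Fintype ι] {η u : EuclideanSpace ℝ ι → ι → ℝ}
  {S : EuclideanSpace ℝ ι → Matrix ι ι ℝ} {x : EuclideanSpace ℝ ι}

/-- The flux of the momentum component `u·η` of a fluid with velocity `u` and stress tensor `S`: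
for incompressible flow of unit density the momentum equation reads `∂ₜu = div (S - u ⊗ u)`. -/
def momentumFlux (η u : EuclideanSpace ℝ ι → ι → ℝ) (S : EuclideanSpace ℝ ι → Matrix ι ι ℝ)
    (x : EuclideanSpace ℝ ι) : ι → ℝ :=
  η x ᵥ* (S x - vecMulVec (u x) (u x))

theorem contDiff_momentumFlux (hη : ContDiff ℝ 1 η) (hu : ContDiff ℝ 1 u)
    (hS : ∀ i, ContDiff ℝ 1 fun x => S x i) : ContDiff ℝ 1 (momentumFlux η u S) := by
  have hS' (i j : ι) : ContDiff ℝ 1 fun x => S x i j := contDiff_pi.1 (hS i) j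
  refine contDiff_pi.2 fun j => ?_
  simp only [momentumFlux, vecMul, dotProduct, Matrix.sub_apply, vecMulVec_apply]
  fun_prop

theorem dotProduct_momentumFlux (hS : (S x).IsSymm) (w : ι → ℝ) :
    w ⬝ᵥ momentumFlux η u S x = w ⬝ᵥ S x *ᵥ η x - (η x ⬝ᵥ u x) * (w ⬝ᵥ u x) := by
  rw [momentumFlux, vecMul_sub, dotProduct_sub, vecMul_vecMulVec, dotProduct_smul, smul_eq_mul,
    ← mulVec_transpose, hS.eq]

end MomentumFlux

section Divergence

theorem sum_sum_mul_eq_zero_of_isSymm {ι α : Type*} [Fintype ι] [NonUnitalNonAssocRing α]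
    [IsAddTorsionFree α] {M A : Matrix ι ι α} (hM : M.IsSymm) (hA : ∀ i j, A i j = -A j i) :
    ∑ i, ∑ j, M i j * A i j = 0 := by
  refine self_eq_neg.1 ?_
  conv_lhs => rw [Finset.sum_comm]
  simp only [← Finset.sum_neg_distrib]
  refine Finset.sum_congr rfl fun i _ => Finset.sum_congr rfl fun j _ => ?_
  rw [hM.apply, hA, mul_neg]

variable {ι : Type*} [Fintype ι] [DecidableEq ι]

/-- The divergence `∑ⱼ ∂ⱼFⱼ` of a vector field on `ℝⁿ`. Values of vector fields are plain tuples
throughout, while points are in `EuclideanSpace`. -/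
noncomputable def divergence (F : EuclideanSpace ℝ ι → ι → ℝ) (x : EuclideanSpace ℝ ι) : ℝ :=
  ∑ j, fderiv ℝ (fun y => F y j) x (EuclideanSpace.single j 1)

/-- A `C¹` vector field on `ℝⁿ` whose Jacobian is antisymmetric, that is, a Killing field of the
Euclidean metric. -/
structure IsKillingField (η : EuclideanSpace ℝ ι → ι → ℝ) : Prop where
  contDiff : ContDiff ℝ 1 η
  fderiv_antisymm : ∀ x i j, fderiv ℝ (fun y => η y i) x (EuclideanSpace.single j 1) =
    -fderiv ℝ (fun y => η y j) x (EuclideanSpace.single i 1)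

variable {F G : EuclideanSpace ℝ ι → ι → ℝ} {x : EuclideanSpace ℝ ι}

theorem continuous_divergence (hF : ContDiff ℝ 1 F) : Continuous (divergence F) :=
  continuous_finsetSum _ fun j _ =>
    ((contDiff_pi.1 hF j).continuous_fderiv one_ne_zero).clm_apply continuous_const

theorem divergence_sub (hF : DifferentiableAt ℝ F x) (hG : DifferentiableAt ℝ G x) :
    divergence (fun y => F y - G y) x = divergence F x - divergence G x := by
  simp only [divergence, Pi.sub_apply, ← Finset.sum_sub_distrib]
  refine Finset.sum_congr rfl fun j _ => ?_
  rw [fderiv_fun_sub (differentiableAt_pi.1 hF j) (differentiableAt_pi.1 hG j)]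
  rfl

theorem divergence_sum {κ : Type*} {s : Finset κ} {F : κ → EuclideanSpace ℝ ι → ι → ℝ}
    (hF : ∀ k ∈ s, DifferentiableAt ℝ (F k) x) :
    divergence (fun y => ∑ k ∈ s, F k y) x = ∑ k ∈ s, divergence (F k) x := by
  simp only [divergence, Finset.sum_apply]
  rw [Finset.sum_comm]
  refine Finset.sum_congr rfl fun j _ => ?_
  rw [fderiv_fun_sum fun k hk => differentiableAt_pi.1 (hF k hk) j]
  simp

theorem clm_toLp_eq_sum (L : EuclideanSpace ℝ ι →L[ℝ] ℝ) (u : ι → ℝ) :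
    L (WithLp.toLp 2 u) = ∑ j, u j * L (EuclideanSpace.single j 1) := by
  conv_lhs => rw [← (EuclideanSpace.basisFun ι ℝ).sum_repr (WithLp.toLp 2 u)]
  simp

theorem divergence_smul {f : EuclideanSpace ℝ ι → ℝ} (hf : DifferentiableAt ℝ f x)
    (hF : DifferentiableAt ℝ F x) :
    divergence (fun y => f y • F y) x =
      f x * divergence F x + fderiv ℝ f x (WithLp.toLp 2 (F x)) := by
  simp only [divergence, clm_toLp_eq_sum, Finset.mul_sum, ← Finset.sum_add_distrib, Pi.smul_apply,
    smul_eq_mul]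
  refine Finset.sum_congr rfl fun j _ => ?_
  rw [fderiv_fun_mul hf (differentiableAt_pi.1 hF j)]
  simp

theorem divergence_vecMul_of_isSymm {M : EuclideanSpace ℝ ι → Matrix ι ι ℝ}
    {η : EuclideanSpace ℝ ι → ι → ℝ} (hη : IsKillingField η) (hM : (M x).IsSymm)
    (hMd : ∀ i, DifferentiableAt ℝ (fun y => M y i) x) :
    divergence (fun y => η y ᵥ* M y) x = ∑ i, η x i * divergence (fun y => M y i) x := by
  have hηd (i : ι) : DifferentiableAt ℝ (fun y => η y i) x :=
    differentiableAt_pi.1 (hη.contDiff.differentiable one_ne_zero x) i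
  have hcontr : ∑ i, fderiv ℝ (fun y => η y i) x (WithLp.toLp 2 (M x i)) = 0 := by
    simp only [clm_toLp_eq_sum]
    exact sum_sum_mul_eq_zero_of_isSymm hM (hη.fderiv_antisymm x)
  calc divergence (fun y => η y ᵥ* M y) x
      = ∑ i, divergence (fun y => η y i • M y i) x := by
        simp only [vecMul_eq_sum]
        exact divergence_sum fun i _ => (hηd i).smul (hMd i)
    _ = ∑ i, η x i * divergence (fun y => M y i) x := by
        simp only [divergence_smul (hηd _) (hMd _), Finset.sum_add_distrib, hcontr, add_zero]

theorem divergence_momentumFlux {S : EuclideanSpace ℝ ι → Matrix ι ι ℝ}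
    {u η : EuclideanSpace ℝ ι → ι → ℝ} (hη : IsKillingField η) (hS : (S x).IsSymm)
    (hSd : ∀ i, DifferentiableAt ℝ (fun y => S y i) x) (hu : DifferentiableAt ℝ u x)
    (hdiv : divergence u x = 0) :
    divergence (momentumFlux η u S) x =
      ∑ i, η x i * (divergence (fun y => S y i) x -
        ∑ j, u x j * fderiv ℝ (fun y => u y i) x (EuclideanSpace.single j 1)) := by
  have hui (i : ι) : DifferentiableAt ℝ (fun y => u y i) x := differentiableAt_pi.1 hu i
  have huu (i : ι) : DifferentiableAt ℝ (fun y => vecMulVec (u y) (u y) i) x := (hui i).smul hu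
  have hsymm : (S x - vecMulVec (u x) (u x)).IsSymm :=
    hS.sub (by simp [IsSymm, transpose_vecMulVec])
  refine (divergence_vecMul_of_isSymm hη hsymm fun i => (hSd i).sub (huu i)).trans <|
    Finset.sum_congr rfl fun i _ => ?_
  have hconv : divergence (fun y => vecMulVec (u y) (u y) i) x =
      ∑ j, u x j * fderiv ℝ (fun y => u y i) x (EuclideanSpace.single j 1) :=
    (divergence_smul (hui i) hu).trans (by rw [hdiv, mul_zero, zero_add, clm_toLp_eq_sum])
  rw [← hconv, ← divergence_sub (hSd i) (huu i)]
  rfl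

theorem deriv_dotProduct_eq_divergence_momentumFlux {S : EuclideanSpace ℝ ι → Matrix ι ι ℝ}
    {u : ℝ → EuclideanSpace ℝ ι → ι → ℝ} {η : EuclideanSpace ℝ ι → ι → ℝ} {t : ℝ}
    (hη : IsKillingField η) (hS : (S x).IsSymm)
    (hSd : ∀ i, DifferentiableAt ℝ (fun y => S y i) x)
    (hut : DifferentiableAt ℝ (fun s => u s x) t) (hux : DifferentiableAt ℝ (u t) x)
    (hdiv : divergence (u t) x = 0)
    (hmom : ∀ i, deriv (fun s => u s x i) t +
      ∑ j, u t x j * fderiv ℝ (fun y => u t y i) x (EuclideanSpace.single j 1) =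
        divergence (fun y => S y i) x) :
    deriv (fun s => u s x ⬝ᵥ η x) t = divergence (momentumFlux η (u t) S) x := by
  have hderiv : HasDerivAt (fun s => u s x ⬝ᵥ η x)
      (∑ i, deriv (fun s => u s x i) t * η x i) t :=
    HasDerivAt.fun_sum fun i _ => (differentiableAt_pi.1 hut i).hasDerivAt.mul_const (η x i)
  rw [hderiv.deriv, divergence_momentumFlux hη hS hSd hux hdiv]
  refine Finset.sum_congr rfl fun i _ => ?_
  rw [← hmom i, add_sub_cancel_right, mul_comm]

end Divergence

section Cutoff

theorem deriv_smoothTransition_of_nonpos {t : ℝ} (ht : t ≤ 0) :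
    deriv Real.smoothTransition t = 0 :=
  IsLocalMin.deriv_eq_zero <| Eventually.of_forall fun y =>
    (Real.smoothTransition.zero_of_nonpos ht).trans_le (Real.smoothTransition.nonneg y)

theorem deriv_smoothTransition_of_one_le {t : ℝ} (ht : 1 ≤ t) :
    deriv Real.smoothTransition t = 0 :=
  IsLocalMax.deriv_eq_zero <| Eventually.of_forall fun y =>
    (Real.smoothTransition.le_one y).trans_eq (Real.smoothTransition.one_of_one_le ht).symm

theorem continuous_deriv_smoothTransition : Continuous (deriv Real.smoothTransition) :=
  (Real.smoothTransition.contDiff (n := 1)).continuous_deriv le_rfl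

theorem exists_abs_mul_deriv_smoothTransition_le :
    ∃ M, ∀ t : ℝ, |t * deriv Real.smoothTransition t| ≤ M := by
  refine HasCompactSupport.exists_bound_of_continuous
    (HasCompactSupport.intro (isCompact_Icc (a := (0 : ℝ)) (b := 1)) fun t ht => ?_)
    (continuous_id.mul continuous_deriv_smoothTransition)
  rcases le_or_gt t 0 with h0 | h0
  · simp [deriv_smoothTransition_of_nonpos h0]
  · have h1 : 1 ≤ t := (not_le.1 fun h => ht ⟨h0.le, h⟩).le
    simp [deriv_smoothTransition_of_one_le h1]

theorem eventually_smoothTransition_natCast_mul (s : ℝ) :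
    ∀ᶠ n : ℕ in atTop, Real.smoothTransition (n * s) = (Ioi 0).indicator 1 s ∧
      deriv Real.smoothTransition (n * s) = 0 := by
  rcases le_or_gt s 0 with hs | hs
  · refine Eventually.of_forall fun n => ?_
    have hns : n * s ≤ 0 := mul_nonpos_of_nonneg_of_nonpos n.cast_nonneg hs
    simp [Real.smoothTransition.zero_of_nonpos hns, deriv_smoothTransition_of_nonpos hns, hs]
  · filter_upwards [(tendsto_natCast_atTop_atTop.atTop_mul_const hs).eventually_ge_atTop 1]
      with n hn
    simp [Real.smoothTransition.one_of_one_le hn, deriv_smoothTransition_of_one_le hn, hs]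

theorem exists_abs_cutoff_le (C : ℝ) : ∃ K, ∀ (n : ℕ) (s d g : ℝ), (0 < s → |g| ≤ C * s) →
    |Real.smoothTransition (n * s) * d + n * deriv Real.smoothTransition (n * s) * g| ≤
      |d| + K := by
  obtain ⟨M, hM⟩ := exists_abs_mul_deriv_smoothTransition_le
  have hM0 : 0 ≤ M := (abs_nonneg _).trans (hM 0)
  refine ⟨M * |C|, fun n s d g hg => (abs_add_le _ _).trans (add_le_add ?_ ?_)⟩
  · rw [abs_mul, abs_of_nonneg (Real.smoothTransition.nonneg _)]
    exact mul_le_of_le_one_left (abs_nonneg _) (Real.smoothTransition.le_one _)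
  rcases le_or_gt s 0 with hs | hs
  · rw [deriv_smoothTransition_of_nonpos (mul_nonpos_of_nonneg_of_nonpos n.cast_nonneg hs)]
    simpa using mul_nonneg hM0 (abs_nonneg C)
  calc |n * deriv Real.smoothTransition (n * s) * g|
      ≤ |n * deriv Real.smoothTransition (n * s)| * (s * |C|) := by
        rw [abs_mul]
        gcongr
        calc |g| ≤ C * s := hg hs
          _ ≤ |C| * s := by gcongr; exact le_abs_self C
          _ = s * |C| := mul_comm _ _
    _ = |n * s * deriv Real.smoothTransition (n * s)| * |C| := by
        simp only [abs_mul, abs_of_pos hs]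
        ring
    _ ≤ M * |C| := by gcongr; exact hM _

theorem tendsto_integral_cutoff {α : Type*} [MeasurableSpace α] {μ : Measure α}
    [IsFiniteMeasure μ] {ρ D g : α → ℝ} {C : ℝ} (hρ : Measurable ρ) (hD : Integrable D μ)
    (hg : AEStronglyMeasurable g μ) (hgρ : ∀ᵐ x ∂μ, 0 < ρ x → |g x| ≤ C * ρ x) :
    Tendsto (fun n : ℕ => ∫ x, (Real.smoothTransition (n * ρ x) * D x +
      n * deriv Real.smoothTransition (n * ρ x) * g x) ∂μ) atTop
      (𝓝 (∫ x in {x | 0 < ρ x}, D x ∂μ)) := by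
  obtain ⟨K, hK⟩ := exists_abs_cutoff_le C
  rw [← integral_indicator (measurableSet_lt measurable_const hρ)]
  refine tendsto_integral_of_dominated_convergence (fun x => |D x| + K) (fun n => ?_)
    (hD.abs.add (integrable_const K)) (fun n => ?_) (ae_of_all _ fun x => ?_)
  · have hρn : Measurable fun x => n * ρ x := hρ.const_mul _
    exact ((Real.smoothTransition.continuous.measurable.comp hρn).aestronglyMeasurable.mul
      hD.aestronglyMeasurable).add (((continuous_deriv_smoothTransition.measurable.comp
        hρn).const_mul _).aestronglyMeasurable.mul hg)
  · filter_upwards [hgρ] with x hx using hK n (ρ x) (D x) (g x) hx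
  · refine tendsto_const_nhds.congr' ?_
    filter_upwards [eventually_smoothTransition_natCast_mul (ρ x)] with n hn
    rw [hn.1, hn.2]
    simp [indicator_apply]

end Cutoff

section DivergenceTheorem

theorem isCompact_ofLp_preimage_Icc {ι : Type*} (a b : ι → ℝ) :
    IsCompact (WithLp.ofLp ⁻¹' Icc a b : Set (EuclideanSpace ℝ ι)) :=
  (PiLp.homeomorph 2 fun _ : ι => ℝ).isCompact_preimage.2 isCompact_Icc

/-- The open box `∏ᵢ (aᵢ, bᵢ)` in Euclidean space. -/
def openBox {ι : Type*} (a b : ι → ℝ) : Set (EuclideanSpace ℝ ι) :=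
  {x | ∀ i, x i ∈ Ioo (a i) (b i)}

variable {n : ℕ} {a b : Fin (n + 1) → ℝ}
  {F : EuclideanSpace ℝ (Fin (n + 1)) → Fin (n + 1) → ℝ}

theorem openBox_subset_ofLp_preimage_Icc {ι : Type*} (a b : ι → ℝ) :
    openBox a b ⊆ WithLp.ofLp ⁻¹' Icc a b :=
  fun _ hx => ⟨fun i => (hx i).1.le, fun i => (hx i).2.le⟩

theorem measurableSet_openBox {ι : Type*} [Finite ι] (a b : ι → ℝ) :
    MeasurableSet (openBox a b) := by
  simp only [openBox, mem_Ioo, ofPred_forall]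
  measurability

theorem toLp_insertNth_eq_add_smul_single (i : Fin (n + 1)) (s t : ℝ) (w : Fin n → ℝ) :
    WithLp.toLp 2 (i.insertNth t w : Fin (n + 1) → ℝ) =
      WithLp.toLp 2 (i.insertNth s w : Fin (n + 1) → ℝ) + (t - s) • EuclideanSpace.single i 1 := by
  ext j
  refine Fin.succAboveCases i ?_ (fun k => ?_) j <;> simp

theorem integral_openBox_divergence_eq_zero (hab : a ≤ b) (hF : ContDiff ℝ 1 F)
    (hface : ∀ i x, x i = a i →
      F (x + (b i - a i) • EuclideanSpace.single i 1) i = F x i) :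
    ∫ x in openBox a b, divergence F x = 0 := by
  let L : (Fin (n + 1) → ℝ) →L[ℝ] EuclideanSpace ℝ (Fin (n + 1)) :=
    (EuclideanSpace.equiv (Fin (n + 1)) ℝ).symm
  have hFd (i) (x : Fin (n + 1) → ℝ) : HasFDerivAt (fun y => F (WithLp.toLp 2 y) i)
      ((fderiv ℝ (fun y => F y i) (WithLp.toLp 2 x)).comp L) x :=
    HasFDerivAt.comp x
      ((contDiff_pi.1 hF i).differentiable one_ne_zero (WithLp.toLp 2 x)).hasFDerivAt L.hasFDerivAt
  have hpre : WithLp.toLp 2 ⁻¹' openBox a b = univ.pi fun i => Ioo (a i) (b i) := by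
    ext; simp [openBox]
  have hIcc : (univ.pi fun i => Ioo (a i) (b i)) =ᵐ[volume] Icc a b :=
    Measure.univ_pi_Ioo_ae_eq_Icc
  rw [← (PiLp.volume_preserving_toLp (Fin (n + 1))).setIntegral_preimage_emb
    (MeasurableEquiv.toLp 2 _).measurableEmbedding, hpre,
    setIntegral_congr_set hIcc]
  refine (integral_divergence_of_hasFDerivAt_off_countable' a b hab
    (fun i x => F (WithLp.toLp 2 x) i) _ ∅ countable_empty
    (fun i x _ => (hFd i x).continuousAt.continuousWithinAt) (fun x _ i => hFd i x)
    (((continuous_divergence hF).comp L.continuous).continuousOn.integrableOn_compact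
      isCompact_Icc)).trans ?_
  refine Finset.sum_eq_zero fun i _ => sub_eq_zero.2 <| integral_congr_ae <| ae_of_all _ fun w => ?_
  simp only [toLp_insertNth_eq_add_smul_single i (a i) (b i)]
  exact hface i _ (by simp)

theorem divergence_smoothTransition_smul {ρ : EuclideanSpace ℝ (Fin (n + 1)) → ℝ}
    (hρ : ContDiff ℝ 1 ρ) (hF : ContDiff ℝ 1 F) (c : ℝ) (x : EuclideanSpace ℝ (Fin (n + 1))) :
    divergence (fun y => Real.smoothTransition (c * ρ y) • F y) x =
      Real.smoothTransition (c * ρ x) * divergence F x +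
        c * deriv Real.smoothTransition (c * ρ x) * fderiv ℝ ρ x (WithLp.toLp 2 (F x)) := by
  have hχ : HasDerivAt Real.smoothTransition (deriv Real.smoothTransition (c * ρ x)) (c * ρ x) :=
    (Real.smoothTransition.contDiff.differentiable one_ne_zero _).hasDerivAt
  have hχρ : HasFDerivAt (fun y => Real.smoothTransition (c * ρ y))
      (deriv Real.smoothTransition (c * ρ x) • c • fderiv ℝ ρ x) x :=
    hχ.comp_hasFDerivAt (f := fun y => c * ρ y) x
      ((hρ.differentiable one_ne_zero x).hasFDerivAt.const_mul c)
  rw [divergence_smul hχρ.differentiableAt (hF.differentiable one_ne_zero x), hχρ.fderiv]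
  simp only [FunLike.coe_smul, Pi.smul_apply, smul_eq_mul]
  ring

theorem integral_openBox_inter_divergence_eq_zero {ρ : EuclideanSpace ℝ (Fin (n + 1)) → ℝ} {C : ℝ}
    (hab : a ≤ b) (hF : ContDiff ℝ 1 F) (hρ : ContDiff ℝ 1 ρ)
    (hface : ∀ i x, x i = a i →
      (ρ x ≤ 0 ∧ ρ (x + (b i - a i) • EuclideanSpace.single i 1) ≤ 0) ∨
      (ρ (x + (b i - a i) • EuclideanSpace.single i 1) = ρ x ∧
        F (x + (b i - a i) • EuclideanSpace.single i 1) i = F x i))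
    (htan : ∀ x ∈ openBox a b, 0 < ρ x → |fderiv ℝ ρ x (WithLp.toLp 2 (F x))| ≤ C * ρ x) :
    ∫ x in openBox a b ∩ {x | 0 < ρ x}, divergence F x = 0 := by
  have hbox := isCompact_ofLp_preimage_Icc a b
  have : IsFiniteMeasure (volume.restrict (openBox a b)) :=
    isFiniteMeasure_restrict.2 (measure_lt_top_of_subset (openBox_subset_ofLp_preimage_Icc a b)
      hbox.measure_lt_top.ne).ne
  have hcutoff (k : ℕ) : ∫ x in openBox a b, (Real.smoothTransition (k * ρ x) * divergence F x +
      k * deriv Real.smoothTransition (k * ρ x) * fderiv ℝ ρ x (WithLp.toLp 2 (F x))) = 0 := by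
    simp only [← divergence_smoothTransition_smul hρ hF]
    refine integral_openBox_divergence_eq_zero hab
      ((Real.smoothTransition.contDiff.comp (contDiff_const.mul hρ)).smul hF) fun i x hx => ?_
    rcases hface i x hx with ⟨h, h'⟩ | ⟨h, h'⟩
    · simp [Real.smoothTransition.zero_of_nonpos
        (mul_nonpos_of_nonneg_of_nonpos (Nat.cast_nonneg k) h),
        Real.smoothTransition.zero_of_nonpos
        (mul_nonpos_of_nonneg_of_nonpos (Nat.cast_nonneg k) h')]
    · simp only [Pi.smul_apply, h, h']
  have hlim := tendsto_integral_cutoff (μ := volume.restrict (openBox a b))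
    (g := fun x => fderiv ℝ ρ x (WithLp.toLp 2 (F x))) hρ.continuous.measurable
    (((continuous_divergence hF).continuousOn.integrableOn_compact hbox).mono_set
      (openBox_subset_ofLp_preimage_Icc a b))
    ((hρ.continuous_fderiv one_ne_zero).clm_apply
      ((PiLp.continuous_toLp 2 _).comp hF.continuous)).aestronglyMeasurable
    (ae_restrict_of_forall_mem (measurableSet_openBox a b) htan)
  simp only [hcutoff] at hlim
  rw [Measure.restrict_restrict (measurableSet_lt measurable_const hρ.continuous.measurable),
    inter_comm] at hlim
  exact tendsto_nhds_unique hlim tendsto_const_nhds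

end DivergenceTheorem

section Cylinder

variable {R a : ℝ} {x : EuclideanSpace ℝ (Fin 3)}

/-- The open cylinder of radius `|R|` and height `2a` about the third axis; one period of the
flow domain. -/
def openCylinder (R a : ℝ) : Set (EuclideanSpace ℝ (Fin 3)) :=
  {x | x 0 ^ 2 + x 1 ^ 2 < R ^ 2 ∧ |x 2| < a}

/-- The lateral boundary `S₁` of `openCylinder R a`. -/
def lateralSurface (R a : ℝ) : Set (EuclideanSpace ℝ (Fin 3)) :=
  {x | x 0 ^ 2 + x 1 ^ 2 = R ^ 2 ∧ |x 2| ≤ a}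

/-- The horizontal part `(x₁, x₂, 0)` of the position vector; on `lateralSurface R a` it is `R`
times the outer unit normal. -/
def radial (x : EuclideanSpace ℝ (Fin 3)) : Fin 3 → ℝ := ![x 0, x 1, 0]

/-- The defining function `R² - x₁² - x₂²` of the lateral boundary, positive inside the cylinder. -/
def lateralGap (R : ℝ) (x : EuclideanSpace ℝ (Fin 3)) : ℝ := R ^ 2 - (x 0 ^ 2 + x 1 ^ 2)

theorem contDiff_lateralGap (R : ℝ) : ContDiff ℝ 1 (lateralGap R) := by
  unfold lateralGap
  fun_prop

theorem fderiv_lateralGap_toLp (R : ℝ) (x : EuclideanSpace ℝ (Fin 3)) (u : Fin 3 → ℝ) :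
    fderiv ℝ (lateralGap R) x (WithLp.toLp 2 u) = -2 * (radial x ⬝ᵥ u) := by
  have hcoord (i : Fin 3) : HasFDerivAt (fun y : EuclideanSpace ℝ (Fin 3) => y i)
      (EuclideanSpace.proj (𝕜 := ℝ) i) x := (EuclideanSpace.proj (𝕜 := ℝ) i).hasFDerivAt
  have hgap : HasFDerivAt (lateralGap R) _ x :=
    (((hcoord 0).pow 2).add ((hcoord 1).pow 2)).const_sub (R ^ 2)
  rw [hgap.fderiv]
  simp only [_root_.add_apply, _root_.neg_apply, _root_.smul_apply, PiLp.proj_apply, nsmul_eq_mul,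
    smul_eq_mul, dotProduct, radial, Fin.sum_univ_three, cons_val]
  push_cast
  ring

theorem openCylinder_eq_openBox_inter (hR : 0 ≤ R) :
    openCylinder R a = openBox (-![R, R, a]) ![R, R, a] ∩ {x | 0 < lateralGap R x} := by
  ext x
  simp only [openCylinder, openBox, lateralGap, mem_ofPred_eq, mem_inter_iff, sub_pos, Pi.neg_apply,
    mem_Ioo, ← abs_lt, Fin.forall_fin_succ, IsEmpty.forall_iff, and_true]
  refine ⟨fun ⟨hlat, haxial⟩ => ⟨⟨?_, ?_, haxial⟩, hlat⟩, fun h => ⟨h.2, h.1.2.2⟩⟩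
  · exact abs_lt_of_sq_lt_sq ((le_add_of_nonneg_right (sq_nonneg (x 1))).trans_lt hlat) hR
  · exact abs_lt_of_sq_lt_sq ((le_add_of_nonneg_left (sq_nonneg (x 0))).trans_lt hlat) hR

theorem openCylinder_subset_ofLp_preimage_Icc (hR : 0 ≤ R) :
    openCylinder R a ⊆ WithLp.ofLp ⁻¹' Icc (-![R, R, a]) ![R, R, a] := by
  rw [openCylinder_eq_openBox_inter hR]
  exact inter_subset_left.trans (openBox_subset_ofLp_preimage_Icc _ _)

theorem lateralSurface_subset_ofLp_preimage_Icc (hR : 0 ≤ R) :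
    lateralSurface R a ⊆ WithLp.ofLp ⁻¹' Icc (-![R, R, a]) ![R, R, a] := by
  rintro x ⟨hlat, haxial⟩
  have h0 : |x 0| ≤ R :=
    abs_le_of_sq_le_sq ((le_add_of_nonneg_right (sq_nonneg _)).trans_eq hlat) hR
  have h1 : |x 1| ≤ R :=
    abs_le_of_sq_le_sq ((le_add_of_nonneg_left (sq_nonneg _)).trans_eq hlat) hR
  simp [Pi.le_def, Fin.forall_fin_succ, abs_le.1 h0, abs_le.1 h1, abs_le.1 haxial]

theorem measurableSet_openCylinder (R a : ℝ) : MeasurableSet (openCylinder R a) := by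
  unfold openCylinder
  measurability

theorem exists_mem_lateralSurface_dist_le (hR : 0 < R) (hx : x ∈ openCylinder R a) :
    ∃ y ∈ lateralSurface R a, dist x y ≤ lateralGap R x / R := by
  obtain ⟨r, θ, hr, hx0, hx1⟩ :
      ∃ r θ : ℝ, 0 ≤ r ∧ x 0 = r * Real.cos θ ∧ x 1 = r * Real.sin θ :=
    ⟨‖(⟨x 0, x 1⟩ : ℂ)‖, Complex.arg ⟨x 0, x 1⟩, norm_nonneg _,
      (Complex.norm_mul_cos_arg ⟨x 0, x 1⟩).symm,
      (Complex.norm_mul_sin_arg ⟨x 0, x 1⟩).symm⟩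
  have hr2 : x 0 ^ 2 + x 1 ^ 2 = r ^ 2 := by
    rw [hx0, hx1]
    linear_combination r ^ 2 * Real.cos_sq_add_sin_sq θ
  have hrR : r ≤ R := abs_le_of_sq_le_sq' (hr2 ▸ hx.1.le) hR.le |>.2
  refine ⟨!₂[R * Real.cos θ, R * Real.sin θ, x 2], ⟨?_, hx.2.le⟩, ?_⟩
  · simp only [cons_val_zero, cons_val_one]
    linear_combination R ^ 2 * Real.cos_sq_add_sin_sq θ
  calc dist x !₂[R * Real.cos θ, R * Real.sin θ, x 2] = R - r := by
        rw [EuclideanSpace.dist_eq, Real.sqrt_eq_iff_eq_sq (by positivity) (by linarith)]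
        simp only [Fin.sum_univ_three, Real.dist_eq, sq_abs, hx0, hx1, cons_val, sub_self]
        linear_combination (R - r) ^ 2 * Real.cos_sq_add_sin_sq θ
    _ ≤ lateralGap R x / R := by
        rw [lateralGap, hr2, le_div_iff₀ hR]
        nlinarith

theorem exists_abs_le_mul_lateralGap (hR : 0 < R) {g : EuclideanSpace ℝ (Fin 3) → ℝ}
    (hg : ContDiff ℝ 1 g) (hzero : ∀ x ∈ lateralSurface R a, g x = 0) :
    ∃ C, ∀ x ∈ openCylinder R a, |g x| ≤ C * lateralGap R x := by
  obtain ⟨K, hK⟩ := hg.locallyLipschitz.locallyLipschitzOn.exists_lipschitzOnWith_of_compact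
    (isCompact_ofLp_preimage_Icc (-![R, R, a]) ![R, R, a])
  refine ⟨K / R, fun x hx => ?_⟩
  obtain ⟨y, hy, hxy⟩ := exists_mem_lateralSurface_dist_le hR hx
  calc |g x| = dist (g x) (g y) := by rw [hzero y hy, Real.dist_0_eq_abs]
    _ ≤ K * dist x y := hK.dist_le_mul x (openCylinder_subset_ofLp_preimage_Icc hR.le hx) y
        (lateralSurface_subset_ofLp_preimage_Icc hR.le hy)
    _ ≤ K * (lateralGap R x / R) := by gcongr
    _ = K / R * lateralGap R x := by ring

theorem integral_openCylinder_divergence_eq_zero (hR : 0 < R) (ha : 0 ≤ a)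
    {F : EuclideanSpace ℝ (Fin 3) → Fin 3 → ℝ} (hF : ContDiff ℝ 1 F)
    (htan : ∀ x ∈ lateralSurface R a, radial x ⬝ᵥ F x = 0)
    (hper : ∀ x, F (x + (2 * a) • EuclideanSpace.single 2 1) 2 = F x 2) :
    ∫ x in openCylinder R a, divergence F x = 0 := by
  have hflux : ContDiff ℝ 1 fun x => -2 * (radial x ⬝ᵥ F x) := by
    simp only [radial, dotProduct, Fin.sum_univ_three, cons_val]
    fun_prop
  obtain ⟨C, hC⟩ := exists_abs_le_mul_lateralGap hR hflux fun x hx => by rw [htan x hx, mul_zero]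
  rw [openCylinder_eq_openBox_inter hR.le] at hC ⊢
  refine integral_openBox_inter_divergence_eq_zero (C := C) ?_ hF (contDiff_lateralGap R)
    (fun i x hx => ?_) fun x hx hgap => ?_
  · simp [Pi.le_def, Fin.forall_fin_succ, hR.le, ha]
  · fin_cases i
    · have hx : x 0 = -R := hx
      left
      simp [lateralGap, hx, sq_nonneg]
    · have hx : x 1 = -R := hx
      left
      simp [lateralGap, hx, sq_nonneg]
    · right
      simpa [lateralGap, ← two_mul] using hper x
  · rw [fderiv_lateralGap_toLp]
    exact hC x ⟨hx, hgap⟩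

end Cylinder

theorem hasDerivAt_setIntegral_of_contDiff {E G : Type*} [NormedAddCommGroup E] [NormedSpace ℝ E]
    [MeasurableSpace E] [BorelSpace E] [NormedAddCommGroup G] [NormedSpace ℝ G] {μ : Measure E}
    [IsFiniteMeasureOnCompacts μ] {s K : Set E} (hs : MeasurableSet s) (hK : IsCompact K)
    (hsK : s ⊆ K) {f : ℝ → E → G} (hf : ContDiff ℝ 1 fun q : ℝ × E => f q.1 q.2) (t : ℝ) :
    HasDerivAt (fun r => ∫ x in s, f r x ∂μ) (∫ x in s, deriv (fun r => f r x) t ∂μ) t := by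
  have hderiv (r : ℝ) (x : E) : HasDerivAt (fun r => f r x)
      (fderiv ℝ (fun q : ℝ × E => f q.1 q.2) (r, x) (1, 0)) r :=
    HasFDerivAt.comp_hasDerivAt (f := fun r => (r, x)) r
      (hf.differentiable one_ne_zero (r, x)).hasFDerivAt
      ((hasDerivAt_id r).prodMk (hasDerivAt_const r x))
  have hcont : Continuous fun q : ℝ × E => deriv (fun r => f r q.2) q.1 := by
    simp only [(hderiv _ _).deriv]
    exact (hf.continuous_fderiv one_ne_zero).clm_apply continuous_const
  have hint {g : E → G} (hg : Continuous g) : IntegrableOn g s μ :=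
    (hg.continuousOn.integrableOn_compact hK).mono_set hsK
  have hslice (r : ℝ) : IntegrableOn (f r) s μ := hint (hf.continuous.comp (.prodMk_right r))
  obtain ⟨M, hM⟩ := ((isCompact_Icc (a := t - 1) (b := t + 1)).prod hK).exists_bound_of_continuousOn
    hcont.continuousOn
  exact (hasDerivAt_integral_of_dominated_loc_of_deriv_le (bound := fun _ => M)
    (Icc_mem_nhds (sub_one_lt t) (lt_add_one t))
    (Eventually.of_forall fun r => (hslice r).aestronglyMeasurable) (hslice t)
    (hint (hcont.comp (.prodMk_right t))).aestronglyMeasurable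
    (ae_restrict_of_forall_mem hs fun x hx r hr => hM (r, x) ⟨hr, hsK hx⟩)
    ((continuousOn_const.integrableOn_compact hK).mono_set hsK)
    (ae_of_all _ fun x r _ => (hderiv r x).differentiableAt.hasDerivAt)).2

section Conservation

theorem stmt_7_general {R a T : ℝ} (hR : 0 < R) (ha : 0 ≤ a)
    {u : ℝ → EuclideanSpace ℝ (Fin 3) → Fin 3 → ℝ}
    {S : ℝ → EuclideanSpace ℝ (Fin 3) → Matrix (Fin 3) (Fin 3) ℝ}
    {η : EuclideanSpace ℝ (Fin 3) → Fin 3 → ℝ} (hη : IsKillingField η)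
    (hu : ContDiff ℝ 1 fun q : ℝ × EuclideanSpace ℝ (Fin 3) => u q.1 q.2)
    (hS : ∀ t ∈ Icc 0 T, ∀ i, ContDiff ℝ 1 fun x => S t x i)
    (hsymm : ∀ t ∈ Icc 0 T, ∀ x, (S t x).IsSymm)
    (hmom : ∀ t ∈ Icc 0 T, ∀ x ∈ openCylinder R a, ∀ i,
      deriv (fun s => u s x i) t + ∑ j, u t x j * pd (fun y => u t y i) j x =
        divergence (fun y => S t y i) x)
    (hdiv : ∀ t ∈ Icc 0 T, ∀ x ∈ openCylinder R a, divergence (u t) x = 0)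
    (hslip : ∀ t ∈ Icc 0 T, ∀ x ∈ lateralSurface R a, radial x ⬝ᵥ u t x = 0)
    (hstress : ∀ t ∈ Icc 0 T, ∀ x ∈ lateralSurface R a, radial x ⬝ᵥ S t x *ᵥ η x = 0)
    (hη_per : ∀ x, η (x + (2 * a) • EuclideanSpace.single 2 1) = η x)
    (hu_per : ∀ t ∈ Icc 0 T, ∀ x, u t (x + (2 * a) • EuclideanSpace.single 2 1) = u t x)
    (hS_per : ∀ t ∈ Icc 0 T, ∀ x, S t (x + (2 * a) • EuclideanSpace.single 2 1) = S t x) :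
    (∀ t ∈ Icc 0 T, HasDerivAt (fun s => ∫ x in openCylinder R a, u s x ⬝ᵥ η x) 0 t) ∧
    (∀ t ∈ Icc 0 T, ∫ x in openCylinder R a, u t x ⬝ᵥ η x =
      ∫ x in openCylinder R a, u 0 x ⬝ᵥ η x) := by
  have hu_slice (t : ℝ) : ContDiff ℝ 1 (u t) := hu.comp (contDiff_prodMk_right t)
  have huη : ContDiff ℝ 1 fun q : ℝ × EuclideanSpace ℝ (Fin 3) => u q.1 q.2 ⬝ᵥ η q.2 := by
    have := hη.contDiff
    simp only [dotProduct]
    fun_prop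
  have hlocal (t) (ht : t ∈ Icc 0 T) (x) (hx : x ∈ openCylinder R a) :
      deriv (fun s => u s x ⬝ᵥ η x) t = divergence (momentumFlux η (u t) (S t)) x :=
    deriv_dotProduct_eq_divergence_momentumFlux hη (hsymm t ht x)
      (fun i => (hS t ht i).differentiable one_ne_zero x)
      ((hu.comp (contDiff_prodMk_left x)).differentiable one_ne_zero t)
      ((hu_slice t).differentiable one_ne_zero x) (hdiv t ht x hx) (hmom t ht x hx)
  have hderiv (t) (ht : t ∈ Icc 0 T) :
      HasDerivAt (fun s => ∫ x in openCylinder R a, u s x ⬝ᵥ η x) 0 t := by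
    have hbalance : ∫ x in openCylinder R a, divergence (momentumFlux η (u t) (S t)) x = 0 := by
      refine integral_openCylinder_divergence_eq_zero hR ha
        (contDiff_momentumFlux hη.contDiff (hu_slice t) (hS t ht))
        (fun x hx => ?_) fun x => ?_
      · rw [dotProduct_momentumFlux (hsymm t ht x), hstress t ht x hx, hslip t ht x hx, mul_zero,
          sub_zero]
      · simp only [momentumFlux, hη_per, hu_per t ht, hS_per t ht]
    rw [← hbalance, ← setIntegral_congr_fun (measurableSet_openCylinder R a) (hlocal t ht)]
    exact hasDerivAt_setIntegral_of_contDiff (measurableSet_openCylinder R a)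
      (isCompact_ofLp_preimage_Icc _ _) (openCylinder_subset_ofLp_preimage_Icc hR.le) huη t
  exact ⟨hderiv, constant_of_has_deriv_right_zero
    (fun t ht => (hderiv t ht).continuousAt.continuousWithinAt)
    fun t ht => (hderiv t (Ico_subset_Icc_self ht)).hasDerivWithinAt⟩

end Conservation

section NavierStokes

variable {ν : ℝ} {u : EuclideanSpace ℝ (Fin 3) → Fin 3 → ℝ} {p : EuclideanSpace ℝ (Fin 3) → ℝ}

/-- The stress tensor `T = ν (∇u + ∇uᵀ) - p I` of an incompressible Newtonian fluid. -/
noncomputable def newtonianStress (ν : ℝ) (u : EuclideanSpace ℝ (Fin 3) → Fin 3 → ℝ)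
    (p : EuclideanSpace ℝ (Fin 3) → ℝ) (x : EuclideanSpace ℝ (Fin 3)) :
    Matrix (Fin 3) (Fin 3) ℝ :=
  fun i j => ν * (pd (fun z => u z i) j x + pd (fun z => u z j) i x) - if i = j then p x else 0

theorem contDiff_pd {f : EuclideanSpace ℝ (Fin 3) → ℝ} {m n : WithTop ℕ∞} (hf : ContDiff ℝ n f)
    (hmn : m + 1 ≤ n) (j : Fin 3) : ContDiff ℝ m (pd f j) :=
  (hf.fderiv_right hmn).clm_apply contDiff_const

theorem pd_add_period {f : EuclideanSpace ℝ (Fin 3) → ℝ} {w : EuclideanSpace ℝ (Fin 3)}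
    (hf : ∀ x, f (x + w) = f x) (j : Fin 3) (x : EuclideanSpace ℝ (Fin 3)) :
    pd f j (x + w) = pd f j x := by
  simp only [pd, ← fderiv_comp_add_right w, hf]

theorem contDiff_newtonianStress (hu : ContDiff ℝ 2 u) (hp : ContDiff ℝ 1 p) (i : Fin 3) :
    ContDiff ℝ 1 fun x => newtonianStress ν u p x i := by
  have hpd (i j : Fin 3) : ContDiff ℝ 1 (pd (fun z => u z i) j) :=
    contDiff_pd (contDiff_pi.1 hu i) (by norm_num) j
  refine contDiff_pi.2 fun j => (contDiff_const.mul ((hpd i j).add (hpd j i))).sub ?_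
  split_ifs
  exacts [hp, contDiff_const]

theorem isSymm_newtonianStress (x : EuclideanSpace ℝ (Fin 3)) :
    (newtonianStress ν u p x).IsSymm :=
  IsSymm.ext fun i j => by simp only [newtonianStress, eq_comm, add_comm]

theorem newtonianStress_add_period {w : EuclideanSpace ℝ (Fin 3)} (hu : ∀ x, u (x + w) = u x)
    (hp : ∀ x, p (x + w) = p x) (x : EuclideanSpace ℝ (Fin 3)) :
    newtonianStress ν u p (x + w) = newtonianStress ν u p x := by
  have hpd (i j : Fin 3) : pd (fun z => u z i) j (x + w) = pd (fun z => u z i) j x :=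
    pd_add_period (fun y => congrFun (hu y) i) j x
  ext i j
  simp only [newtonianStress, hp, hpd]

theorem hasFDerivAt_eta (x : EuclideanSpace ℝ (Fin 3)) (i : Fin 3) :
    HasFDerivAt (fun y => eta y i) (![-EuclideanSpace.proj 1, EuclideanSpace.proj 0, 0] i :
      EuclideanSpace ℝ (Fin 3) →L[ℝ] ℝ) x := by
  fin_cases i
  exacts [(EuclideanSpace.proj (𝕜 := ℝ) (1 : Fin 3)).hasFDerivAt.neg,
    (EuclideanSpace.proj (𝕜 := ℝ) (0 : Fin 3)).hasFDerivAt, hasFDerivAt_const 0 x]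

theorem isKillingField_eta : IsKillingField eta where
  contDiff := contDiff_pi.2 fun i => by
    fin_cases i
    exacts [(EuclideanSpace.proj (𝕜 := ℝ) (1 : Fin 3)).contDiff.neg,
      (EuclideanSpace.proj (𝕜 := ℝ) (0 : Fin 3)).contDiff, contDiff_const]
  fderiv_antisymm x i j := by
    simp only [(hasFDerivAt_eta x _).fderiv]
    fin_cases i <;> fin_cases j <;> simp

theorem eta_add_smul_single_two (c : ℝ) (x : EuclideanSpace ℝ (Fin 3)) :
    eta (x + c • EuclideanSpace.single 2 1) = eta x := by
  simp [eta]

theorem radial_dotProduct_eq_zero {R : ℝ} (hR : R ≠ 0) {x : EuclideanSpace ℝ (Fin 3)}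
    {w : Fin 3 → ℝ} (h : w 0 * (x 0 / R) + w 1 * (x 1 / R) + w 2 * 0 = 0) :
    radial x ⬝ᵥ w = 0 := by
  field_simp at h
  simp only [radial, dotProduct, Fin.sum_univ_three, cons_val]
  linear_combination h

theorem dotProduct_newtonianStress_mulVec (x : EuclideanSpace ℝ (Fin 3)) (w τ : Fin 3 → ℝ) :
    w ⬝ᵥ newtonianStress ν u p x *ᵥ τ =
      ν * ∑ i, ∑ j, w i * (pd (fun z => u z i) j x + pd (fun z => u z j) i x) * τ j -
        p x * (w ⬝ᵥ τ) := by
  simp only [newtonianStress, mulVec, dotProduct, Fin.sum_univ_three, Fin.reduceEq, if_true,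
    if_false]
  ring

theorem radial_dotProduct_newtonianStress_mulVec_eta {R : ℝ} (hR : R ≠ 0)
    {x : EuclideanSpace ℝ (Fin 3)}
    (h : ∑ i, ∑ j, ![x 0 / R, x 1 / R, 0] i *
      (pd (fun z => u z i) j x + pd (fun z => u z j) i x) * ![-(x 1) / R, x 0 / R, 0] j = 0) :
    radial x ⬝ᵥ newtonianStress ν u p x *ᵥ eta x = 0 := by
  have hnormal : radial x = R • ![x 0 / R, x 1 / R, 0] := by
    simp [radial, mul_div_cancel₀ _ hR]
  have htangent : eta x = R • ![-(x 1) / R, x 0 / R, 0] := by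
    simp [eta, mul_div_cancel₀ _ hR]
  have horth : ![x 0 / R, x 1 / R, 0] ⬝ᵥ ![-(x 1) / R, x 0 / R, 0] = 0 := by
    simp only [dotProduct, Fin.sum_univ_three, cons_val]
    ring
  rw [hnormal, htangent, mulVec_smul, smul_dotProduct, dotProduct_smul,
    dotProduct_newtonianStress_mulVec, h, horth]
  simp

end NavierStokes

/-- Conservation of the total swirl (2.7)–(2.8): for a smooth solution of the
incompressible Navier–Stokes equations in the periodic cylinder
`Ω = {r < R, |x₃| < a}` with slip boundary conditions on the lateral boundary
and periodicity in `x₃`, the quantity `∫_Ω v·η dx` is conserved. -/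
theorem stmt_7 (R a ν T : ℝ) (hR : 0 < R) (ha : 0 < a) (hν : 0 < ν) (hT : 0 < T)
    (Ω : Set (EuclideanSpace ℝ (Fin 3)))
    (hΩ : Ω = {x | (x 0) ^ 2 + (x 1) ^ 2 < R ^ 2 ∧ |x 2| < a})
    (v : ℝ → EuclideanSpace ℝ (Fin 3) → Fin 3 → ℝ)
    (p : ℝ → EuclideanSpace ℝ (Fin 3) → ℝ)
    (hv_smooth : ContDiff ℝ (⊤ : ℕ∞) (fun q : ℝ × EuclideanSpace ℝ (Fin 3) => v q.1 q.2))
    (hp_smooth : ContDiff ℝ (⊤ : ℕ∞) (fun q : ℝ × EuclideanSpace ℝ (Fin 3) => p q.1 q.2))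
    -- momentum equation: ∂_t v_i + Σ_j v_j ∂_j v_i = Σ_j ∂_j T_{ij},
    -- where T_{ij} = ν (∂_j v_i + ∂_i v_j) − p δ_{ij}
    (hmom : ∀ t ∈ Set.Icc (0 : ℝ) T, ∀ x ∈ Ω, ∀ i : Fin 3,
      deriv (fun s => v s x i) t + ∑ j : Fin 3, v t x j * pd (fun y => v t y i) j x =
        ∑ j : Fin 3, pd (fun y =>
          ν * (pd (fun z => v t z i) j y + pd (fun z => v t z j) i y) -
            (if i = j then p t y else 0)) j x)
    -- incompressibility
    (hdiv : ∀ t ∈ Set.Icc (0 : ℝ) T, ∀ x ∈ Ω,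
      ∑ j : Fin 3, pd (fun y => v t y j) j x = 0)
    -- impermeability on the lateral boundary S₁ (normal n = (x₀/R, x₁/R, 0))
    (hslip : ∀ t ∈ Set.Icc (0 : ℝ) T, ∀ x : EuclideanSpace ℝ (Fin 3),
      (x 0) ^ 2 + (x 1) ^ 2 = R ^ 2 → |x 2| ≤ a →
        v t x 0 * (x 0 / R) + v t x 1 * (x 1 / R) + v t x 2 * 0 = 0)
    -- vanishing tangential stress on S₁: n·D(v)·τ = 0 for the two tangent vectors
    (hstress : ∀ t ∈ Set.Icc (0 : ℝ) T, ∀ x : EuclideanSpace ℝ (Fin 3),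
      (x 0) ^ 2 + (x 1) ^ 2 = R ^ 2 → |x 2| ≤ a →
      ∀ τ : Fin 3 → ℝ, (τ = ![-(x 1) / R, x 0 / R, 0] ∨ τ = ![0, 0, 1]) →
        ∑ i : Fin 3, ∑ j : Fin 3,
          (![x 0 / R, x 1 / R, 0] i) *
            (pd (fun z => v t z i) j x + pd (fun z => v t z j) i x) * τ j = 0)
    -- periodicity in the x₃-direction (period 2a) for v and p
    (hper_v : ∀ t ∈ Set.Icc (0 : ℝ) T, ∀ x : EuclideanSpace ℝ (Fin 3),
      v t (x + (2 * a) • EuclideanSpace.single 2 (1 : ℝ)) = v t x)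
    (hper_p : ∀ t ∈ Set.Icc (0 : ℝ) T, ∀ x : EuclideanSpace ℝ (Fin 3),
      p t (x + (2 * a) • EuclideanSpace.single 2 (1 : ℝ)) = p t x) :
    (∀ t ∈ Set.Icc (0 : ℝ) T,
      HasDerivAt (fun s => ∫ x in Ω, ∑ i : Fin 3, v s x i * eta x i) 0 t) ∧
    (∀ t ∈ Set.Icc (0 : ℝ) T,
      (∫ x in Ω, ∑ i : Fin 3, v t x i * eta x i) =
        ∫ x in Ω, ∑ i : Fin 3, v 0 x i * eta x i) := by
  subst hΩ
  have hv_slice (t : ℝ) : ContDiff ℝ (⊤ : ℕ∞) (v t) := hv_smooth.comp (contDiff_prodMk_right t)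
  have hp_slice (t : ℝ) : ContDiff ℝ (⊤ : ℕ∞) (p t) := hp_smooth.comp (contDiff_prodMk_right t)
  exact stmt_7_general (S := fun t => newtonianStress ν (v t) (p t)) hR ha.le isKillingField_eta
    (hv_smooth.of_le (by norm_num))
    (fun t _ => contDiff_newtonianStress (contDiff_infty.1 (hv_slice t) 2)
      (contDiff_infty.1 (hp_slice t) 1))
    (fun _ _ => isSymm_newtonianStress) hmom hdiv
    (fun t ht x hx => radial_dotProduct_eq_zero hR.ne' (hslip t ht x hx.1 hx.2))
    (fun t ht x hx => radial_dotProduct_newtonianStress_mulVec_eta hR.ne'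
      (hstress t ht x hx.1 hx.2 _ (.inl rfl)))
    (eta_add_smul_single_two _) hper_v
    (fun t ht => newtonianStress_add_period (hper_v t ht) (hper_p t ht))
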